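/- Let ξ be a real irrational number. Then 1/(μ(ξ) − 1) ≤ τ'''(ξ), where τ'''(ξ) = sup T'''(ξ) (with sup ∅ = 0) and T'''(ξ) is the set of all τ > 0 such that for any sequences (Q_n) and (ε_n) of positive real numbers with Q_n → +∞, ε_n → 0 and ε_n ≥ Q_n^{−τ + o(1)}, there exist integer sequences (u_n) and (v_n) with lim_{n→∞} u_n/Q_n = 1 and lim_{n→∞} (u_n ξ − v_n)/ε_n = 1. -/

import Mathlib

/-!
The points `(u, u ξ - v)`, with `u, v` integers, form a lattice `Λ` of covolume one in the plane,
and the condition on `τ` asks for points of `Λ` very close, in relative terms, to `(Q, ε)`.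

If `|ξ - p / q| > q ^ (-μ)` for all large `q`, Dirichlet's theorem at height `X` gives a reduced
fraction `p / q` with `q ≤ X` and `|q ξ - p| < 1 / X`, and the hypothesis forces
`q ≥ X ^ (1 / (μ - 1))` (`exists_rat_large_den`). Completing `(q, p)` by Bézout to a basis with
`0 ≤ q' < q` gives two generators of `Λ` with coordinates at most `q` and `2 / q`; hence every
point of the plane is within `O(X)` and `O(X ^ (-1 / (μ - 1)))` of `Λ`
(`exists_lattice_point_near`). Taking `X` to be a power of `Q` slightly below `Q` shows that every
positive `τ < 1 / (μ - 1)` is admissible (`mem_TSet'''_of_lt`).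

As the supremum is that of a set of reals, which is `0` for an unbounded set, one also needs the
upper bound `τ ≤ 1` for admissible `τ` (`TSet'''_le_one`): otherwise two points of `Λ` close to
`(Q, ε)` and `(Q, 2 ε)` would have a nonzero integer determinant tending to `0`.
-/


open Filter Topology

/-- The irrationality exponent of a real number, as an extended real:
the infimum of all real `μ` such that `|ξ - p/q| > 1/q^μ` for all integers `p, q`
with `q` sufficiently large (`⊤` if no such real `μ` exists). -/
noncomputable def irrationalityExponent (ξ : ℝ) : EReal :=
  sInf {x : EReal | ∃ μ : ℝ, x = (μ : EReal) ∧
    ∀ᶠ q : ℕ in atTop, ∀ p : ℤ, |ξ - (p : ℝ) / (q : ℝ)| > 1 / (q : ℝ) ^ μ}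

/-- The set `T(ξ)` of all `τ > 0` for which there exist integer sequences `(u_n)`, `(v_n)`
with `u_n ≠ 0`, `u_n ξ - v_n → 0`, `|u_{n+1} ξ - v_{n+1}| = |u_n ξ - v_n|^{1+o(1)}` and
`|u_n ξ - v_n| ≤ |u_n|^{-τ+o(1)}`. -/
def TSet (ξ : ℝ) : Set ℝ :=
  {τ : ℝ | 0 < τ ∧ ∃ u v : ℕ → ℤ, (∀ n, u n ≠ 0) ∧
    Tendsto (fun n => (u n : ℝ) * ξ - (v n : ℝ)) atTop (𝓝 0) ∧
    (∃ δ : ℕ → ℝ, Tendsto δ atTop (𝓝 0) ∧ ∀ n,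
      |(u (n + 1) : ℝ) * ξ - (v (n + 1) : ℝ)| = |(u n : ℝ) * ξ - (v n : ℝ)| ^ (1 + δ n)) ∧
    (∃ δ : ℕ → ℝ, Tendsto δ atTop (𝓝 0) ∧ ∀ n,
      |(u n : ℝ) * ξ - (v n : ℝ)| ≤ |(u n : ℝ)| ^ (-τ + δ n))}

/-- The set `T'(ξ)` of all `τ > 0` for which there exist integer sequences `(u_n)`, `(v_n)`
and `0 < α < 1 < β` with `|u_n ξ - v_n|^{1/n} → α`, `limsup |u_n|^{1/n} ≤ β` and
`τ = -log α / log β`. -/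
def TSet' (ξ : ℝ) : Set ℝ :=
  {τ : ℝ | 0 < τ ∧ ∃ u v : ℕ → ℤ, ∃ α β : ℝ, 0 < α ∧ α < 1 ∧ 1 < β ∧
    Tendsto (fun n => |(u n : ℝ) * ξ - (v n : ℝ)| ^ (1 / (n : ℝ))) atTop (𝓝 α) ∧
    limsup (fun n => ((|(u n : ℝ)| ^ (1 / (n : ℝ)) : ℝ) : EReal)) atTop ≤ (β : EReal) ∧
    τ = -Real.log α / Real.log β}

/-- The set `T''(ξ)` of all `τ > 0` such that, for any increasing sequence `(Q_n)` of
positive integers, there exist integer sequences `(u_n)`, `(v_n)` with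
`|u_n| ≤ Q_n^{1+o(1)}` and `|u_n ξ - v_n| = Q_n^{-τ+o(1)}`. -/
def TSet'' (ξ : ℝ) : Set ℝ :=
  {τ : ℝ | 0 < τ ∧ ∀ Q : ℕ → ℕ, StrictMono Q → (∀ n, 0 < Q n) →
    ∃ u v : ℕ → ℤ,
      (∃ δ : ℕ → ℝ, Tendsto δ atTop (𝓝 0) ∧ ∀ n,
        |(u n : ℝ)| ≤ (Q n : ℝ) ^ (1 + δ n)) ∧
      (∃ δ : ℕ → ℝ, Tendsto δ atTop (𝓝 0) ∧ ∀ n,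
        |(u n : ℝ) * ξ - (v n : ℝ)| = (Q n : ℝ) ^ (-τ + δ n))}

/-- The set `T'''(ξ)` of all `τ > 0` such that, for any sequences `(Q_n)`, `(ε_n)` of
positive real numbers with `Q_n → ∞`, `ε_n → 0` and `ε_n ≥ Q_n^{-τ+o(1)}`, there exist
integer sequences `(u_n)`, `(v_n)` with `u_n / Q_n → 1` and `(u_n ξ - v_n)/ε_n → 1`. -/
def TSet''' (ξ : ℝ) : Set ℝ :=
  {τ : ℝ | 0 < τ ∧ ∀ Q ε : ℕ → ℝ, (∀ n, 0 < Q n) → (∀ n, 0 < ε n) →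
    Tendsto Q atTop atTop → Tendsto ε atTop (𝓝 0) →
    (∃ δ : ℕ → ℝ, Tendsto δ atTop (𝓝 0) ∧ ∀ n, ε n ≥ Q n ^ (-τ + δ n)) →
    ∃ u v : ℕ → ℤ,
      Tendsto (fun n => (u n : ℝ) / Q n) atTop (𝓝 1) ∧
      Tendsto (fun n => ((u n : ℝ) * ξ - (v n : ℝ)) / ε n) atTop (𝓝 1)}

/-- `τ(ξ) = sup T(ξ)` (with `sup ∅ = 0`, as for the real `sSup`). -/
noncomputable def tauExp (ξ : ℝ) : ℝ := sSup (TSet ξ)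

/-- `τ'(ξ) = sup T'(ξ)` (with `sup ∅ = 0`, as for the real `sSup`). -/
noncomputable def tauExp' (ξ : ℝ) : ℝ := sSup (TSet' ξ)

/-- `τ''(ξ) = sup T''(ξ)` (with `sup ∅ = 0`, as for the real `sSup`). -/
noncomputable def tauExp'' (ξ : ℝ) : ℝ := sSup (TSet'' ξ)

/-- `τ'''(ξ) = sup T'''(ξ)` (with `sup ∅ = 0`, as for the real `sSup`). -/
noncomputable def tauExp''' (ξ : ℝ) : ℝ := sSup (TSet''' ξ)


/-! ### Lattice points near a given point of the plane -/

/-- The Dirichlet approximant `r = p / q` at height `X` satisfies `q ≤ X` and `|q ξ - p| ≤ 1 / X`.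
As `|q ξ - p| > q ^ (1 - μ)` for large `q`, this forces `q ≥ X ^ (1 / (μ - 1))`; each of the
finitely many small denominators is excluded for large `X` since `ξ` is irrational. -/
lemma exists_rat_large_den (ξ : ℝ) (hξ : Irrational ξ) (μ : ℝ) (hμ : 1 < μ)
    (h : ∀ᶠ q : ℕ in atTop, ∀ p : ℤ, |ξ - (p : ℝ) / (q : ℝ)| > 1 / (q : ℝ) ^ μ) :
    ∀ᶠ X : ℝ in atTop, ∃ r : ℚ, (r.den : ℝ) ≤ X ∧ X ^ (1 / (μ - 1)) ≤ (r.den : ℝ) ∧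
      |(r.den : ℝ) * ξ - r.num| ≤ 1 / (r.den : ℝ) := by
  obtain ⟨q₀, hq₀⟩ := eventually_atTop.1 h
  have hsmall : ∀ᶠ X : ℝ in atTop, ∀ q ∈ Finset.range q₀, 0 < q → ∀ p : ℤ,
      X⁻¹ < |(q : ℝ) * ξ - p| := by
    rw [Filter.eventually_all_finset]
    intro q _
    rcases Nat.eq_zero_or_pos q with h0 | h0
    · exact Eventually.of_forall fun X hq => absurd h0 hq.ne'
    have hpos : 0 < |(q : ℝ) * ξ - round ((q : ℝ) * ξ)| := by
      have := (hξ.natCast_mul h0.ne').ne_int (round ((q : ℝ) * ξ))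
      exact abs_pos.2 (sub_ne_zero.2 this)
    filter_upwards [tendsto_inv_atTop_zero.eventually_lt_const hpos] with X hX _ p
    exact hX.trans_le (round_le _ _)
  filter_upwards [hsmall, eventually_ge_atTop 1] with X hX hX1
  have hX0 : 0 < X := by linarith
  have hN : 0 < ⌊X⌋₊ := Nat.floor_pos.2 hX1
  obtain ⟨r, hr, hrN⟩ := ξ.exists_rat_abs_sub_le_and_den_le hN
  have hd : 0 < (r.den : ℝ) := by exact_mod_cast r.den_pos
  have hdX : (r.den : ℝ) ≤ X :=
    (Nat.cast_le.2 hrN).trans (Nat.floor_le hX0.le)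
  have hform : (r.den : ℝ) * |ξ - r| = |(r.den : ℝ) * ξ - r.num| := by
    rw [← abs_of_pos hd, ← abs_mul, abs_of_pos hd, mul_sub]
    congr 2
    exact_mod_cast Rat.den_mul_eq_num r
  have hlt : |(r.den : ℝ) * ξ - r.num| ≤ X⁻¹ := by
    rw [← hform]
    have hfl := Nat.lt_floor_add_one X
    calc (r.den : ℝ) * |ξ - r| ≤ r.den * (1 / ((⌊X⌋₊ + 1) * r.den)) := by gcongr
      _ = (⌊X⌋₊ + 1 : ℝ)⁻¹ := by field_simp
      _ ≤ X⁻¹ := by gcongr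
  refine ⟨r, hdX, ?_, hlt.trans ?_⟩
  · have hq : q₀ ≤ r.den := by
      by_contra! hc
      exact absurd (hX r.den (Finset.mem_range.2 hc) r.den_pos r.num) hlt.not_gt
    have h1 := hq₀ r.den hq r.num
    have hcast : (r.num : ℝ) / (r.den : ℝ) = (r : ℝ) := (Rat.cast_def r).symm
    rw [hcast] at h1
    have h2 : (r.den : ℝ) * (1 / (r.den : ℝ) ^ μ) < X⁻¹ :=
      (mul_lt_mul_of_pos_left h1 hd).trans_le (hform.le.trans hlt)
    have h3 : (r.den : ℝ) * (1 / (r.den : ℝ) ^ μ) = ((r.den : ℝ) ^ (μ - 1))⁻¹ := by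
      rw [Real.rpow_sub hd, Real.rpow_one]
      field_simp
    rw [h3] at h2
    have h4 : X < (r.den : ℝ) ^ (μ - 1) :=
      (inv_lt_inv₀ (by positivity) hX0).1 h2
    calc X ^ (1 / (μ - 1)) ≤ ((r.den : ℝ) ^ (μ - 1)) ^ (1 / (μ - 1)) :=
          Real.rpow_le_rpow hX0.le h4.le (by
            have : 0 < μ - 1 := by linarith
            positivity)
      _ = r.den := by
          rw [← Real.rpow_mul hd.le, mul_one_div_cancel (by linarith), Real.rpow_one]
  · rw [one_div]
    gcongr

/-- The lattice of points `(u, u ξ - v)` has the basis `(q, q ξ - p)`, `(q', q' ξ - p')`, where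
`p / q` is the given fraction and `q p' - p q' = 1`, `0 ≤ q' < q`. Both vectors have first
coordinate at most `q` and second coordinate at most `2 / q`, and rounding the coordinates of
`(A, B)` in this basis produces a nearby lattice point. -/
lemma exists_lattice_point_near (ξ : ℝ) (r : ℚ)
    (hr : |(r.den : ℝ) * ξ - r.num| ≤ 1 / (r.den : ℝ)) (A B : ℝ) :
    ∃ u v : ℤ, |(u : ℝ) - A| ≤ 2 * r.den ∧ |(u : ℝ) * ξ - v - B| ≤ 4 / r.den := by
  have hdZ : (0 : ℤ) < r.den := by exact_mod_cast r.den_pos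
  have hd : 0 < (r.den : ℝ) := by exact_mod_cast r.den_pos
  obtain ⟨q', p', hdet, h0, h1⟩ : ∃ q' p' : ℤ, (r.den : ℤ) * p' - r.num * q' = 1 ∧
      0 ≤ q' ∧ q' < r.den := by
    have hcop : IsCoprime r.num (r.den : ℤ) := by
      rw [Int.isCoprime_iff_gcd_eq_one]
      exact r.reduced
    obtain ⟨a, b, hab⟩ := hcop
    refine ⟨(-a) % r.den, b - r.num * ((-a) / r.den), ?_, Int.emod_nonneg _ hdZ.ne',
      Int.emod_lt_of_pos _ hdZ⟩
    rw [Int.emod_def]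
    linear_combination hab
  have hdetR : (r.den : ℝ) * p' - r.num * q' = 1 := by exact_mod_cast hdet
  have h0R : (0 : ℝ) ≤ q' := by exact_mod_cast h0
  have h1R : (q' : ℝ) ≤ r.den := by exact_mod_cast h1.le
  set q : ℝ := (r.den : ℝ)
  set p : ℝ := (r.num : ℝ)
  have hL' : |(q' : ℝ) * ξ - p'| ≤ 2 / q := by
    have e : (q' : ℝ) * ξ - p' = (q' / q) * (q * ξ - p) - 1 / q := by
      field_simp
      linear_combination -hdetR
    rw [e]
    have hle : q' / q ≤ 1 := (div_le_one hd).2 h1R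
    calc |(q' / q) * (q * ξ - p) - 1 / q| ≤ |(q' / q) * (q * ξ - p)| + |1 / q| := abs_sub _ _
      _ = (q' / q) * |q * ξ - p| + 1 / q := by
          rw [abs_mul, abs_of_nonneg (by positivity : 0 ≤ q' / q),
            abs_of_nonneg (by positivity : 0 ≤ 1 / q)]
      _ ≤ 1 * (1 / q) + 1 / q := by gcongr
      _ = 2 / q := by ring
  -- Cramer's rule: `(A, B) = a (q, q ξ - p) + b (q', q' ξ - p')`.
  set a : ℝ := A * p' - q' * (A * ξ - B) with ha
  set b : ℝ := q * (A * ξ - B) - A * p with hb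
  have hA : A = a * q + b * q' := by
    rw [ha, hb]; linear_combination -A * hdetR
  have hB : B = a * (q * ξ - p) + b * (q' * ξ - p') := by
    rw [ha, hb]; linear_combination -B * hdetR
  have ha' := abs_sub_round a
  have hb' := abs_sub_round b
  refine ⟨round a * r.den + round b * q', round a * r.num + round b * p', ?_, ?_⟩
  · have e : ((round a * r.den + round b * q' : ℤ) : ℝ) - A =
        -((a - round a) * q + (b - round b) * q') := by
      push_cast
      linear_combination -hA
    rw [e, abs_neg]
    calc _ ≤ |a - round a| * |q| + |b - round b| * |(q' : ℝ)| := by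
          rw [← abs_mul, ← abs_mul]; exact abs_add_le _ _
      _ ≤ (1 / 2) * q + (1 / 2) * q := by
          rw [abs_of_pos hd, abs_of_nonneg h0R]; gcongr
      _ ≤ 2 * q := by linarith
  · have e : ((round a * r.den + round b * q' : ℤ) : ℝ) * ξ
        - ((round a * r.num + round b * p' : ℤ) : ℝ) - B =
        -((a - round a) * (q * ξ - p) + (b - round b) * (q' * ξ - p')) := by
      push_cast
      linear_combination -hB
    rw [e, abs_neg]
    calc _ ≤ |a - round a| * |q * ξ - p| + |b - round b| * |q' * ξ - p'| := by
          rw [← abs_mul, ← abs_mul]; exact abs_add_le _ _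
      _ ≤ (1 / 2) * (1 / q) + (1 / 2) * (2 / q) := by gcongr
      _ ≤ 4 / q := by
          have : 0 < 1 / q := by positivity
          have e2 : 2 / q = 2 * (1 / q) := by ring
          have e4 : 4 / q = 4 * (1 / q) := by ring
          rw [e2, e4]; linarith

lemma eventually_exists_near (ξ : ℝ) (hξ : Irrational ξ) (μ : ℝ) (hμ : 1 < μ)
    (h : ∀ᶠ q : ℕ in atTop, ∀ p : ℤ, |ξ - (p : ℝ) / (q : ℝ)| > 1 / (q : ℝ) ^ μ) :
    ∀ᶠ X : ℝ in atTop, ∀ A B : ℝ, ∃ u v : ℤ, |(u : ℝ) - A| ≤ 2 * X ∧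
      |(u : ℝ) * ξ - v - B| ≤ 4 * X ^ (-(1 / (μ - 1))) := by
  filter_upwards [exists_rat_large_den ξ hξ μ hμ h, eventually_gt_atTop 0]
    with X ⟨r, h1, h2, h3⟩ hX A B
  obtain ⟨u, v, hu, hv⟩ := exists_lattice_point_near ξ r h3 A B
  refine ⟨u, v, hu.trans (by gcongr), hv.trans ?_⟩
  rw [Real.rpow_neg hX.le, ← div_eq_mul_inv]
  gcongr

/-! ### Admissible exponents -/

/-- Every positive `τ < 1 / (μ - 1)` is admissible: lattice points are sought at scale
`X = Q ^ (1 - s)`, with `s` so small that `X ^ (-1 / (μ - 1))` is still negligible with respect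
to `Q ^ (-τ + o(1))`. -/
lemma mem_TSet'''_of_lt (ξ : ℝ) (hξ : Irrational ξ) (μ : ℝ) (hμ : 1 < μ)
    (h : ∀ᶠ q : ℕ in atTop, ∀ p : ℤ, |ξ - (p : ℝ) / (q : ℝ)| > 1 / (q : ℝ) ^ μ)
    (τ : ℝ) (hτ : 0 < τ) (hτμ : τ < 1 / (μ - 1)) : τ ∈ TSet''' ξ := by
  refine ⟨hτ, fun Q ε hQ hε hQt _ ⟨δ, hδ, hεδ⟩ => ?_⟩
  have hnear := eventually_exists_near ξ hξ μ hμ h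
  set σ : ℝ := 1 / (μ - 1) with hσ
  have hσ0 : 0 < σ := hτ.trans hτμ
  set s : ℝ := (σ - τ) / (2 * σ) with hs
  have hs0 : 0 < s := div_pos (by linarith) (by linarith)
  have hs1 : 0 < 1 - s := by
    have : s < 1 := by rw [hs, div_lt_one (by linarith)]; linarith
    linarith
  have hσs : σ * (1 - s) = (σ + τ) / 2 := by rw [hs]; field_simp; ring
  have hX : Tendsto (fun n => Q n ^ (1 - s)) atTop atTop :=
    (tendsto_rpow_atTop hs1).comp hQt
  have hex : ∀ n, ∃ w : ℤ × ℤ, (∀ A B : ℝ, ∃ u v : ℤ, |(u : ℝ) - A| ≤ 2 * Q n ^ (1 - s) ∧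
      |(u : ℝ) * ξ - v - B| ≤ 4 * (Q n ^ (1 - s)) ^ (-σ)) →
      |(w.1 : ℝ) - Q n| ≤ 2 * Q n ^ (1 - s) ∧
      |(w.1 : ℝ) * ξ - w.2 - ε n| ≤ 4 * (Q n ^ (1 - s)) ^ (-σ) := by
    intro n
    by_cases hn : ∀ A B : ℝ, ∃ u v : ℤ, |(u : ℝ) - A| ≤ 2 * Q n ^ (1 - s) ∧
      |(u : ℝ) * ξ - v - B| ≤ 4 * (Q n ^ (1 - s)) ^ (-σ)
    · obtain ⟨u, v, huv⟩ := hn (Q n) (ε n)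
      exact ⟨(u, v), fun _ => huv⟩
    · exact ⟨0, fun h' => absurd h' hn⟩
  choose w hw using hex
  have hev := hX.eventually hnear
  refine ⟨fun n => (w n).1, fun n => (w n).2, ?_, ?_⟩
  · rw [tendsto_iff_norm_sub_tendsto_zero]
    have hlim : Tendsto (fun n => 2 * Q n ^ (-s)) atTop (𝓝 0) := by
      simpa using ((tendsto_rpow_neg_atTop hs0).comp hQt).const_mul 2
    refine squeeze_zero' (Eventually.of_forall fun _ => norm_nonneg _) ?_ hlim
    filter_upwards [hev] with n hn
    have h1 := (hw n hn).1
    have hQn := hQ n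
    rw [Real.norm_eq_abs, div_sub_one hQn.ne', abs_div, abs_of_pos hQn, div_le_iff₀ hQn]
    calc _ ≤ 2 * Q n ^ (1 - s) := h1
      _ = 2 * Q n ^ (-s) * Q n := by
        rw [mul_assoc, ← Real.rpow_add_one hQn.ne']; ring_nf
  · rw [tendsto_iff_norm_sub_tendsto_zero]
    have hc : 0 < (σ - τ) / 4 := by linarith
    have hlim : Tendsto (fun n => 4 * Q n ^ (-((σ - τ) / 4))) atTop (𝓝 0) := by
      simpa using ((tendsto_rpow_neg_atTop hc).comp hQt).const_mul 4
    refine squeeze_zero' (Eventually.of_forall fun _ => norm_nonneg _) ?_ hlim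
    filter_upwards [hev, hQt.eventually_ge_atTop 1,
      hδ.eventually_const_lt (neg_lt_zero.2 hc)] with n hn hQ1 hδn
    have h1 := (hw n hn).2
    have hQn := hQ n
    have hεn := hε n
    rw [Real.norm_eq_abs, div_sub_one hεn.ne', abs_div, abs_of_pos hεn, div_le_iff₀ hεn]
    calc _ ≤ 4 * (Q n ^ (1 - s)) ^ (-σ) := h1
      _ = 4 * Q n ^ (-((σ + τ) / 2)) := by
        rw [← Real.rpow_mul hQn.le, ← hσs]; ring_nf
      _ ≤ 4 * Q n ^ (-((σ - τ) / 4) + (-τ + δ n)) := by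
        have := Real.rpow_le_rpow_of_exponent_le hQ1
          (show -((σ + τ) / 2) ≤ -((σ - τ) / 4) + (-τ + δ n) by linarith)
        linarith
      _ = 4 * Q n ^ (-((σ - τ) / 4)) * Q n ^ (-τ + δ n) := by
        rw [Real.rpow_add hQn, mul_assoc]
      _ ≤ 4 * Q n ^ (-((σ - τ) / 4)) * ε n := by
        have := hεδ n
        gcongr

/-- If `τ > 1` were admissible, take `Q = n + 1` with `ε = Q ^ (-τ)` and with `2 ε`. The
determinant of the two resulting lattice points is an integer equivalent to `Q ε → 0`, hence
eventually zero, which is absurd. -/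
lemma TSet'''_le_one (ξ τ : ℝ) (hτ : τ ∈ TSet''' ξ) : τ ≤ 1 := by
  by_contra! hτ1
  obtain ⟨hτ0, H⟩ := hτ
  set Q : ℕ → ℝ := fun n => (n : ℝ) + 1 with hQdef
  have hQ : ∀ n, 0 < Q n := fun n => by positivity
  have hQt : Tendsto Q atTop atTop :=
    tendsto_atTop_add_const_right _ _ tendsto_natCast_atTop_atTop
  set ε : ℕ → ℝ := fun n => Q n ^ (-τ) with hεdef
  have hε : ∀ n, 0 < ε n := fun n => Real.rpow_pos_of_pos (hQ n) _
  have hεt : Tendsto ε atTop (𝓝 0) := (tendsto_rpow_neg_atTop hτ0).comp hQt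
  obtain ⟨u, v, hu, hL⟩ := H Q ε hQ hε hQt hεt
    ⟨fun _ => 0, tendsto_const_nhds, fun n => by simp [hεdef]⟩
  obtain ⟨u', v', hu', hL'⟩ := H Q (fun n => 2 * ε n) hQ (fun n => by have := hε n; positivity)
    hQt (by simpa using hεt.const_mul 2)
    ⟨fun _ => 0, tendsto_const_nhds, fun n => by
      have := hε n
      simp only [add_zero, ge_iff_le]
      change ε n ≤ 2 * ε n
      linarith⟩
  have hratio : Tendsto (fun n => ((u' n * v n - u n * v' n : ℤ) : ℝ) / (Q n * ε n))
      atTop (𝓝 1) := by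
    have := (hu.mul (hL'.const_mul 2)).sub (hu'.mul hL)
    norm_num at this
    refine this.congr fun n => ?_
    have h1 := (hQ n).ne'
    have h2 := (hε n).ne'
    push_cast
    field_simp
    ring
  have hQε : Tendsto (fun n => Q n * ε n) atTop (𝓝 0) := by
    have : Tendsto (fun n => Q n ^ (-(τ - 1))) atTop (𝓝 0) :=
      (tendsto_rpow_neg_atTop (by linarith)).comp hQt
    refine this.congr fun n => ?_
    rw [hεdef, mul_comm, ← Real.rpow_add_one (hQ n).ne']
    ring_nf
  have hk : Tendsto (fun n => ((u' n * v n - u n * v' n : ℤ) : ℝ)) atTop (𝓝 0) := by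
    have := hratio.mul hQε
    rw [mul_zero] at this
    refine this.congr fun n => ?_
    exact div_mul_cancel₀ _ (mul_pos (hQ n) (hε n)).ne'
  have hk0 : ∀ᶠ n in atTop, ((u' n * v n - u n * v' n : ℤ) : ℝ) / (Q n * ε n) = 0 := by
    have h1 : ∀ᶠ n in atTop, |((u' n * v n - u n * v' n : ℤ) : ℝ)| < 1 := by
      have := hk.abs
      rw [abs_zero] at this
      exact this.eventually_lt_const one_pos
    filter_upwards [h1] with n hn
    have : |u' n * v n - u n * v' n| < 1 := by exact_mod_cast hn
    rw [Int.abs_lt_one_iff.1 this]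
    simp
  exact zero_ne_one (tendsto_nhds_unique (tendsto_const_nhds.congr' (hk0.mono fun n hn => hn.symm))
    hratio)

/-! ### Comparison with the irrationality exponent -/

/-- Rounding `q ξ` gives `|ξ - p / q| ≤ 1 / (2 q)`, so an exponent `μ ≤ 1` is impossible. -/
lemma one_lt_of_eventually (ξ μ : ℝ)
    (h : ∀ᶠ q : ℕ in atTop, ∀ p : ℤ, |ξ - (p : ℝ) / (q : ℝ)| > 1 / (q : ℝ) ^ μ) : 1 < μ := by
  by_contra! hμ
  obtain ⟨q, hq, hq1⟩ := (h.and (eventually_ge_atTop 1)).exists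
  have hq1R : (1 : ℝ) ≤ q := by exact_mod_cast hq1
  have hq0 : (0 : ℝ) < q := by linarith
  have h1 := hq (round ((q : ℝ) * ξ))
  have h2 := abs_sub_round ((q : ℝ) * ξ)
  have h3 : |ξ - (round ((q : ℝ) * ξ) : ℝ) / q| = |(q : ℝ) * ξ - round ((q : ℝ) * ξ)| / q := by
    rw [← abs_of_pos hq0, ← abs_div, abs_of_pos hq0]
    congr 1
    field_simp
  have h4 : (q : ℝ) ^ μ ≤ q := by
    simpa using Real.rpow_le_rpow_of_exponent_le hq1R hμ
  have h5 : 1 / (q : ℝ) ≤ 1 / (q : ℝ) ^ μ := by gcongr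
  have h6 : |(q : ℝ) * ξ - round ((q : ℝ) * ξ)| / q ≤ 1 / q := by
    gcongr
    linarith
  linarith

theorem inv_mu_sub_one_le_tau''' (ξ : ℝ) (hξ : Irrational ξ) :
    (irrationalityExponent ξ - 1)⁻¹ ≤ ((tauExp''' ξ : ℝ) : EReal) := by
  have hbdd : BddAbove (TSet''' ξ) := ⟨1, fun τ hτ => TSet'''_le_one ξ τ hτ⟩
  have hnonneg : 0 ≤ tauExp''' ξ := Real.sSup_nonneg fun τ hτ => hτ.1.le
  have hkey : ∀ μ : ℝ, (∀ᶠ q : ℕ in atTop, ∀ p : ℤ,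
      |ξ - (p : ℝ) / (q : ℝ)| > 1 / (q : ℝ) ^ μ) → 1 < μ ∧ 1 / (μ - 1) ≤ tauExp''' ξ := by
    intro μ h
    have hμ := one_lt_of_eventually ξ μ h
    refine ⟨hμ, le_of_forall_lt fun c hc => ?_⟩
    have hpos : 0 < 1 / (μ - 1) := one_div_pos.2 (by linarith)
    obtain ⟨τ, hτ1, hτ2⟩ := exists_between (max_lt hc hpos)
    exact ((le_max_left _ _).trans_lt hτ1).trans_le
      (le_csSup hbdd (mem_TSet'''_of_lt ξ hξ μ hμ h τ ((le_max_right _ _).trans_lt hτ1) hτ2))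
  unfold irrationalityExponent
  set S : Set EReal := {x : EReal | ∃ μ : ℝ, x = (μ : EReal) ∧
    ∀ᶠ q : ℕ in atTop, ∀ p : ℤ, |ξ - (p : ℝ) / (q : ℝ)| > 1 / (q : ℝ) ^ μ} with hS
  rcases S.eq_empty_or_nonempty with hE | ⟨x, μ, rfl, hμ⟩
  · rw [hE, sInf_empty, show (⊤ : EReal) - 1 = ⊤ from EReal.top_sub_coe 1, EReal.inv_top]
    exact_mod_cast hnonneg
  set t := tauExp''' ξ
  have ht : 0 < t := by
    obtain ⟨h1, h2⟩ := hkey μ hμ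
    exact (one_div_pos.2 (by linarith)).trans_le h2
  have hlow : ((1 + 1 / t : ℝ) : EReal) ≤ sInf S := by
    refine le_sInf ?_
    rintro _ ⟨ν, rfl, hν⟩
    obtain ⟨h1, h2⟩ := hkey ν hν
    have := (one_div_le (by linarith) ht).1 h2
    exact EReal.coe_le_coe_iff.2 (by linarith)
  have hup : sInf S ≤ (μ : EReal) := sInf_le ⟨μ, rfl, hμ⟩
  generalize sInf S = M at hlow hup
  induction M with
  | bot => exact absurd (le_bot_iff.1 hlow) (EReal.coe_ne_bot _)
  | top => exact absurd hup (by simp)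
  | coe m =>
    have hm : 1 + 1 / t ≤ m := EReal.coe_le_coe_iff.1 hlow
    have htp : 0 < 1 / t := one_div_pos.2 ht
    rw [← EReal.coe_one, ← EReal.coe_sub, ← EReal.coe_inv, EReal.coe_le_coe_iff, ← one_div]
    exact (one_div_le (by linarith) ht).2 (by linarith)
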